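/- arXiv:1310.5371 — 2 statements merged into one kernel-verified Lean document; each statement's English description precedes it below -/
import Mathlib

section
/- There exists a constant c > 0, depending only on d, K₀, κ, α and ℓ, such that ψ(ξ) ≥ c L(|ξ|⁻¹) for all ξ ∈ ℝ^d with |ξ| ≥ 5. -/
open MeasureTheory Metric Set Filter
open scoped ENNReal Topology RealInnerProductSpace

noncomputable section

/-- `L(r) = ∫_r^1 ℓ(s)/s ds`. -/
def Lfun (ℓ : ℝ → ℝ) (r : ℝ) : ℝ := ∫ s in r..1, ℓ s / s

/-- `ℓ` varies regularly at `0+` with index `ρ`. -/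
def RegVaryAt0 (ℓ : ℝ → ℝ) (ρ : ℝ) : Prop :=
  ∀ lam : ℝ, 0 < lam →
    Filter.Tendsto (fun r => ℓ (lam * r) / ℓ r) (𝓝[>] (0 : ℝ)) (𝓝 (lam ^ ρ))

/-- `ℓ` is bounded away from `0` and `∞` on compact subsets of `(0,1)`. -/
def LocBddAway (ℓ : ℝ → ℝ) : Prop :=
  ∀ a b : ℝ, 0 < a → a ≤ b → b < 1 →
    ∃ m M : ℝ, 0 < m ∧ ∀ s : ℝ, a ≤ s → s ≤ b → m ≤ ℓ s ∧ ℓ s ≤ M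

/-- conditions on the (translation invariant) kernel `k`: measurability, nonnegativity,
symmetry, `∫ (1 ∧ |h|²) k(h) dh ≤ K₀` and `κ⁻¹ ℓ(|h|)|h|^{-d} ≤ k(h) ≤ κ ℓ(|h|)|h|^{-d}`
for `0 < |h| ≤ 1`. -/
def KernelCondsTI (d : ℕ) (K₀ κ : ℝ) (ℓ : ℝ → ℝ)
    (k : EuclideanSpace ℝ (Fin d) → ℝ) : Prop :=
  Measurable k ∧ (∀ h, 0 ≤ k h) ∧ (∀ h, k h = k (-h)) ∧
  ((∫⁻ h in ({0}ᶜ : Set (EuclideanSpace ℝ (Fin d))),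
      ENNReal.ofReal (min 1 (‖h‖ ^ 2) * k h)) ≤ ENNReal.ofReal K₀) ∧
  (∀ h : EuclideanSpace ℝ (Fin d), 0 < ‖h‖ → ‖h‖ ≤ 1 →
    κ⁻¹ * (ℓ ‖h‖ / ‖h‖ ^ d) ≤ k h ∧ k h ≤ κ * (ℓ ‖h‖ / ‖h‖ ^ d))

/-- the characteristic exponent `ψ(ξ) = ∫ (1 - cos⟨ξ,h⟩) k(h) dh`. -/
def psiFun (d : ℕ) (k : EuclideanSpace ℝ (Fin d) → ℝ)
    (ξ : EuclideanSpace ℝ (Fin d)) : ℝ :=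
  ∫ h in ({0}ᶜ : Set (EuclideanSpace ℝ (Fin d))), (1 - Real.cos ⟪ξ, h⟫) * k h

/-!
In polar coordinates `ψ(ξ)` dominates an average over directions `θ` of the radial integrals
`∫₀¹ (1 - cos (s ⟨ξ, θ⟩)) ℓ(s) ds/s`, and `|⟨ξ, θ⟩|` is comparable to `|ξ|` on a spherical cap
around `ξ / |ξ|`. At a single `s` the factor `1 - cos (s u)` may vanish, but its mean over the
dilations `s = v r`, `v ∈ (1, 2)`, is bounded below as soon as `r |u|` is; and for small `r`
regular variation keeps `ℓ(v r)` at least of order `ℓ(r)` for most `v`. Hence the mean of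
`(1 - cos (v r u)) ℓ(v r)` over `v` is at least of order `ℓ(r)`. Integrating against `dr/r`, which
is invariant under dilations, bounds the radial integral below by `∫ ℓ(r) dr/r` over
`1/|ξ| < r < δ`. The rest of `L` is a constant, absorbed because the radial integral is bounded
away from zero.
-/

/-! ### Oscillation of the cosine -/

lemma exists_abs_sinc_le {τ : ℝ} (hτ : 0 < τ) :
    ∃ q < 1, ∀ x, τ ≤ |x| → |Real.sinc x| ≤ q := by
  have sinc_abs (x : ℝ) : Real.sinc |x| = Real.sinc x := by
    rcases abs_choice x with h | h <;> simp [h]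
  obtain ⟨y, hy, hmax⟩ := isCompact_Icc.exists_isMaxOn
    (nonempty_Icc.2 (le_max_left τ 2)) (Real.continuous_sinc.abs.continuousOn)
  have hy_pos : 0 < y := hτ.trans_le hy.1
  have hy_lt : |Real.sinc y| < 1 := by
    rw [Real.sinc_of_ne_zero hy_pos.ne', abs_div, div_lt_one (abs_pos.2 hy_pos.ne')]
    exact Real.abs_sin_lt_abs hy_pos.ne'
  refine ⟨max |Real.sinc y| 2⁻¹, max_lt hy_lt (by norm_num), fun x hx ↦ ?_⟩
  rw [← sinc_abs]
  rcases le_total |x| (max τ 2) with h | h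
  · exact le_max_of_le_left (hmax ⟨hx, h⟩)
  · have hx_two : 2 ≤ |x| := (le_max_right τ 2).trans h
    have hx_pos : 0 < |x| := by linarith
    refine le_max_of_le_right ?_
    rw [Real.sinc_of_ne_zero hx_pos.ne', abs_div, abs_abs, div_le_iff₀ hx_pos]
    linarith [Real.abs_sin_le_one |x|]

lemma integral_one_sub_cos_mul (a b t : ℝ) :
    ∫ v in a..b, (1 - Real.cos (v * t)) =
      (b - a) * (1 - Real.sinc ((b - a) / 2 * t) * Real.cos ((a + b) / 2 * t)) := by
  rcases eq_or_ne t 0 with rfl | ht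
  · simp
  rcases eq_or_ne a b with rfl | hab
  · simp
  have hba : b - a ≠ 0 := sub_ne_zero.2 hab.symm
  have h_sin : Real.sin (b * t) - Real.sin (a * t) =
      2 * Real.sin ((b - a) / 2 * t) * Real.cos ((a + b) / 2 * t) := by
    rw [Real.sin_sub_sin]
    ring_nf
  rw [intervalIntegral.integral_sub (by simp) (Continuous.intervalIntegrable (by fun_prop) _ _),
    intervalIntegral.integral_comp_mul_right _ ht, integral_cos, h_sin,
    Real.sinc_of_ne_zero (mul_ne_zero (div_ne_zero hba two_ne_zero) ht)]
  simp only [intervalIntegral.integral_const, smul_eq_mul]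
  field_simp

lemma exists_le_integral_one_sub_cos {a b τ : ℝ} (hab : a < b) (hτ : 0 < τ) :
    ∃ η, 0 < η ∧ ∀ t, τ ≤ |t| → η ≤ ∫ v in a..b, (1 - Real.cos (v * t)) := by
  have hba : 0 < b - a := sub_pos.2 hab
  obtain ⟨q, hq, hsinc⟩ := exists_abs_sinc_le (τ := (b - a) / 2 * τ) (by positivity)
  refine ⟨(b - a) * (1 - q), mul_pos hba (sub_pos.2 hq), fun t ht ↦ ?_⟩
  have h_sinc : |Real.sinc ((b - a) / 2 * t)| ≤ q := hsinc _ <| by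
    rw [abs_mul, abs_of_pos (half_pos hba)]
    gcongr
  have h_mul : Real.sinc ((b - a) / 2 * t) * Real.cos ((a + b) / 2 * t) ≤ q := by
    refine (le_abs_self _).trans ?_
    rw [abs_mul]
    exact (mul_le_of_le_one_right (abs_nonneg _) (Real.abs_cos_le_one _)).trans h_sinc
  rw [integral_one_sub_cos_mul]
  gcongr

lemma exists_le_lintegral_one_sub_cos {a b τ : ℝ} (hab : a < b) (hτ : 0 < τ) :
    ∃ η, 0 < η ∧ ∀ t, τ ≤ |t| →
      ENNReal.ofReal η ≤ ∫⁻ v in Ioo a b, ENNReal.ofReal (1 - Real.cos (v * t)) := by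
  obtain ⟨η, hη, h⟩ := exists_le_integral_one_sub_cos hab hτ
  refine ⟨η, hη, fun t ht ↦ ?_⟩
  have h_int : IntegrableOn (fun v ↦ 1 - Real.cos (v * t)) (Ioo a b) :=
    (Continuous.integrableOn_Icc (by fun_prop)).mono_set Ioo_subset_Icc_self
  rw [← ofReal_integral_eq_lintegral_ofReal h_int
      (.of_forall fun v ↦ sub_nonneg.2 (Real.cos_le_one _)),
    ← integral_Ioc_eq_integral_Ioo, ← intervalIntegral.integral_of_le hab.le]
  exact ENNReal.ofReal_le_ofReal (h t ht)

/-! ### Regular variation in the mean -/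

lemma LocBddAway.pos {ℓ : ℝ → ℝ} (hℓ : LocBddAway ℓ) {s : ℝ} (hs : s ∈ Ioo (0 : ℝ) 1) :
    0 < ℓ s := by
  obtain ⟨m, _, hm, h⟩ := hℓ s s hs.1 le_rfl hs.2
  exact hm.trans_le (h s le_rfl le_rfl).1

/-- Dominated convergence replaces the uniform convergence theorem for regularly varying
functions. -/
lemma RegVaryAt0.tendsto_lintegral_sub_ratio {ℓ : ℝ → ℝ} {ρ : ℝ} (hreg : RegVaryAt0 ℓ ρ)
    (hmeas : Measurable ℓ) (hbdd : LocBddAway ℓ) {a b x : ℝ} (ha : 0 < a)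
    (hx : ∀ v ∈ Ioo a b, x ≤ v ^ ρ) :
    Tendsto (fun r ↦ ∫⁻ v in Ioo a b, ENNReal.ofReal (x - ℓ (v * r) / ℓ r)) (𝓝[>] 0) (𝓝 0) := by
  rcases le_or_gt b a with hab | hab
  · simp [Ioo_eq_empty_of_le hab]
  have hb : 0 < b := ha.trans hab
  rw [← lintegral_zero (μ := volume.restrict (Ioo a b))]
  refine tendsto_lintegral_filter_of_dominated_convergence (fun _ ↦ ENNReal.ofReal x)
    (.of_forall fun r ↦ by fun_prop) ?_ (by simp [ENNReal.mul_eq_top]) ?_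
  · filter_upwards [Ioo_mem_nhdsGT (show (0 : ℝ) < min 1 b⁻¹ by positivity)] with r hr
    filter_upwards [ae_restrict_mem measurableSet_Ioo] with v hv
    have hvr : v * r ∈ Ioo (0 : ℝ) 1 := by
      refine ⟨mul_pos (ha.trans hv.1) hr.1, ?_⟩
      calc v * r < b * b⁻¹ := mul_lt_mul'' hv.2 (hr.2.trans_le (min_le_right _ _))
            (ha.trans hv.1).le hr.1.le
        _ = 1 := mul_inv_cancel₀ hb.ne'
    have hr_mem : r ∈ Ioo (0 : ℝ) 1 := ⟨hr.1, hr.2.trans_le (min_le_left _ _)⟩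
    exact ENNReal.ofReal_le_ofReal
      (sub_le_self _ (div_nonneg (hbdd.pos hvr).le (hbdd.pos hr_mem).le))
  · filter_upwards [ae_restrict_mem measurableSet_Ioo] with v hv
    have h_lim := ENNReal.tendsto_ofReal ((hreg v (ha.trans hv.1)).const_sub x)
    rwa [ENNReal.ofReal_of_nonpos (sub_nonpos.2 (hx v hv))] at h_lim

lemma ofReal_mul_lintegral_le {X : Type*} [MeasurableSpace X] {μ : Measure X} {w f : X → ℝ}
    {C : ℝ} (hw : Measurable w) (hf : Measurable f) (hw_nonneg : ∀ v, 0 ≤ w v)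
    (hw_le : ∀ v, w v ≤ C) (x : ℝ) :
    ENNReal.ofReal x * ∫⁻ v, ENNReal.ofReal (w v) ∂μ ≤
      ∫⁻ v, ENNReal.ofReal (w v * f v) ∂μ +
        ENNReal.ofReal C * ∫⁻ v, ENNReal.ofReal (x - f v) ∂μ := by
  rw [← lintegral_const_mul _ (by fun_prop), ← lintegral_const_mul _ (by fun_prop),
    ← lintegral_add_left (by fun_prop)]
  refine lintegral_mono fun v ↦ ?_
  calc ENNReal.ofReal x * ENNReal.ofReal (w v)
    _ = ENNReal.ofReal (w v * f v + w v * (x - f v)) := by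
      rw [← ENNReal.ofReal_mul' (hw_nonneg v)]
      ring_nf
    _ ≤ ENNReal.ofReal (w v * f v) + ENNReal.ofReal (w v) * ENNReal.ofReal (x - f v) := by
      rw [← ENNReal.ofReal_mul (hw_nonneg v)]
      exact ENNReal.ofReal_add_le
    _ ≤ ENNReal.ofReal (w v * f v) + ENNReal.ofReal C * ENNReal.ofReal (x - f v) := by
      gcongr
      exact hw_le v

lemma min_rpow_le_rpow {a b v : ℝ} (ha : 0 < a) (hv : v ∈ Icc a b) (ρ : ℝ) :
    min (a ^ ρ) (b ^ ρ) ≤ v ^ ρ := by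
  rcases le_total 0 ρ with hρ | hρ
  · exact (min_le_left _ _).trans (Real.rpow_le_rpow ha.le hv.1 hρ)
  · exact (min_le_right _ _).trans
      (Real.rpow_le_rpow_of_nonpos (ha.trans_le hv.1) hv.2 hρ)

lemma RegVaryAt0.exists_le_lintegral_one_sub_cos_mul_ratio {ℓ : ℝ → ℝ} {ρ : ℝ}
    (hreg : RegVaryAt0 ℓ ρ) (hmeas : Measurable ℓ) (hbdd : LocBddAway ℓ) {a b τ : ℝ} (ha : 0 < a)
    (hab : a < b) (hτ : 0 < τ) :
    ∃ c, 0 < c ∧ ∀ᶠ r in 𝓝[>] 0, ∀ t, τ ≤ |t| → ENNReal.ofReal c ≤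
      ∫⁻ v in Ioo a b, ENNReal.ofReal ((1 - Real.cos (v * t)) * (ℓ (v * r) / ℓ r)) := by
  obtain ⟨η, hη, hcos⟩ := exists_le_lintegral_one_sub_cos hab hτ
  have hb : 0 < b := ha.trans hab
  set x : ℝ := min (a ^ ρ) (b ^ ρ)
  have hx : 0 < x := by positivity
  have hx_le (v : ℝ) (hv : v ∈ Ioo a b) : x ≤ v ^ ρ :=
    min_rpow_le_rpow ha (Ioo_subset_Icc_self hv) ρ
  refine ⟨x * η / 2, by positivity, ?_⟩
  filter_upwards [(hreg.tendsto_lintegral_sub_ratio hmeas hbdd ha hx_le).eventually_le_const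
    (ENNReal.ofReal_pos.2 (show 0 < x * η / 4 by positivity))] with r h_deficit t ht
  set I := ∫⁻ v in Ioo a b, ENNReal.ofReal ((1 - Real.cos (v * t)) * (ℓ (v * r) / ℓ r))
  refine ENNReal.le_of_add_le_add_right (a := ENNReal.ofReal (x * η / 2))
    ENNReal.ofReal_ne_top ?_
  calc ENNReal.ofReal (x * η / 2) + ENNReal.ofReal (x * η / 2)
    _ = ENNReal.ofReal x * ENNReal.ofReal η := by
      rw [← ENNReal.ofReal_add (by positivity) (by positivity), add_halves,
        ENNReal.ofReal_mul hx.le]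
    _ ≤ ENNReal.ofReal x * ∫⁻ v in Ioo a b, ENNReal.ofReal (1 - Real.cos (v * t)) := by
      gcongr
      exact hcos t ht
    _ ≤ I + ENNReal.ofReal 2 * ∫⁻ v in Ioo a b, ENNReal.ofReal (x - ℓ (v * r) / ℓ r) :=
      ofReal_mul_lintegral_le (by fun_prop) (by fun_prop)
        (fun v ↦ sub_nonneg.2 (Real.cos_le_one _))
        (fun v ↦ by linarith [Real.neg_one_le_cos (v * t)]) x
    _ ≤ I + ENNReal.ofReal 2 * ENNReal.ofReal (x * η / 4) := by gcongr
    _ = I + ENNReal.ofReal (x * η / 2) := by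
      rw [← ENNReal.ofReal_mul zero_le_two]
      ring_nf

lemma RegVaryAt0.exists_le_lintegral_one_sub_cos_mul {ℓ : ℝ → ℝ} {ρ : ℝ} (hreg : RegVaryAt0 ℓ ρ)
    (hmeas : Measurable ℓ) (hbdd : LocBddAway ℓ) {a b τ : ℝ} (ha : 0 < a) (hab : a < b)
    (hτ : 0 < τ) :
    ∃ c, 0 < c ∧ ∀ᶠ r in 𝓝[>] 0, ∀ t, τ ≤ |t| → ENNReal.ofReal (c * ℓ r) ≤
      ∫⁻ v in Ioo a b, ENNReal.ofReal ((1 - Real.cos (v * t)) * ℓ (v * r)) := by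
  obtain ⟨c, hc, h_ratio⟩ :=
    hreg.exists_le_lintegral_one_sub_cos_mul_ratio hmeas hbdd ha hab hτ
  refine ⟨c, hc, ?_⟩
  filter_upwards [h_ratio, Ioo_mem_nhdsGT one_pos] with r h_ratio hr t ht
  have hℓr : 0 < ℓ r := hbdd.pos hr
  calc ENNReal.ofReal (c * ℓ r)
    _ ≤ (∫⁻ v in Ioo a b, ENNReal.ofReal ((1 - Real.cos (v * t)) * (ℓ (v * r) / ℓ r))) *
          ENNReal.ofReal (ℓ r) := by
      rw [ENNReal.ofReal_mul' hℓr.le]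
      gcongr
      exact h_ratio t ht
    _ = ∫⁻ v in Ioo a b, ENNReal.ofReal ((1 - Real.cos (v * t)) * ℓ (v * r)) := by
      rw [← lintegral_mul_const _ (by fun_prop)]
      refine lintegral_congr fun v ↦ ?_
      rw [← ENNReal.ofReal_mul' hℓr.le, mul_assoc, div_mul_cancel₀ _ hℓr.ne']

/-! ### The radial estimate -/

lemma lintegral_Ioi_comp_mul_left_mul_inv (g : ℝ → ℝ≥0∞) {v : ℝ} (hv : 0 < v) :
    ∫⁻ r in Ioi 0, g (v * r) * ENNReal.ofReal r⁻¹ = ∫⁻ s in Ioi 0, g s * ENNReal.ofReal s⁻¹ := by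
  have h_image : (v * ·) '' Ioi 0 = Ioi 0 := by
    rw [image_mul_left_Ioi hv, mul_zero]
  have h_cov := lintegral_image_eq_lintegral_abs_deriv_mul measurableSet_Ioi
    (fun r _ ↦ ((hasDerivAt_id r).const_mul v).hasDerivWithinAt)
    (mul_right_injective₀ hv.ne').injOn (fun s ↦ g s * ENNReal.ofReal s⁻¹) (s := Ioi 0)
  simp only [id_eq, h_image] at h_cov
  rw [h_cov]
  refine setLIntegral_congr_fun measurableSet_Ioi fun r _ ↦ ?_
  simp only [mul_one, abs_of_pos hv]
  rw [mul_left_comm, ← ENNReal.ofReal_mul hv.le, mul_inv, mul_inv_cancel_left₀ hv.ne']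

/-- Tonelli's theorem and the scale invariance of `dr / r`. -/
lemma lintegral_mul_inv_le_of_le_lintegral_comp_mul {g h : ℝ → ℝ≥0∞} (hg : Measurable g)
    {S T : Set ℝ} (hS : MeasurableSet S) (hT : MeasurableSet T) (hS_pos : S ⊆ Ioi 0)
    (hT_pos : T ⊆ Ioi 0) (hle : ∀ r ∈ S, h r ≤ ∫⁻ v in T, g (v * r)) :
    ∫⁻ r in S, h r * ENNReal.ofReal r⁻¹ ≤
      (∫⁻ s in Ioi 0, g s * ENNReal.ofReal s⁻¹) * volume T :=
  calc ∫⁻ r in S, h r * ENNReal.ofReal r⁻¹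
    _ ≤ ∫⁻ r in S, ∫⁻ v in T, g (v * r) * ENNReal.ofReal r⁻¹ := by
      refine setLIntegral_mono' hS fun r hr ↦ ?_
      rw [lintegral_mul_const _ (by fun_prop)]
      gcongr
      exact hle r hr
    _ ≤ ∫⁻ r in Ioi 0, ∫⁻ v in T, g (v * r) * ENNReal.ofReal r⁻¹ := lintegral_mono_set hS_pos
    _ = ∫⁻ v in T, ∫⁻ r in Ioi 0, g (v * r) * ENNReal.ofReal r⁻¹ :=
      lintegral_lintegral_swap (by fun_prop)
    _ = ∫⁻ _ in T, ∫⁻ s in Ioi 0, g s * ENNReal.ofReal s⁻¹ :=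
      setLIntegral_congr_fun hT fun _ hv ↦ lintegral_Ioi_comp_mul_left_mul_inv g (hT_pos hv)
    _ = (∫⁻ s in Ioi 0, g s * ENNReal.ofReal s⁻¹) * volume T := setLIntegral_const _ _

/-- The contribution of one direction to the characteristic exponent, in polar coordinates: `u` is
the inner product of the frequency with the direction. Values are in `ℝ≥0∞`, so that no
integrability is needed. -/
def radialExponent (ℓ : ℝ → ℝ) (u : ℝ) : ℝ≥0∞ :=
  ∫⁻ s in Ioo 0 1, ENNReal.ofReal ((1 - Real.cos (s * u)) * (ℓ s / s))

lemma radialExponent_eq_lintegral_indicator (ℓ : ℝ → ℝ) (u : ℝ) :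
    radialExponent ℓ u = ∫⁻ s in Ioi 0, (Ioo 0 1).indicator
      (fun s ↦ ENNReal.ofReal ((1 - Real.cos (s * u)) * ℓ s)) s * ENNReal.ofReal s⁻¹ := by
  simp only [← indicator_mul_left (Ioo (0 : ℝ) 1) _ fun s ↦ ENNReal.ofReal s⁻¹]
  rw [radialExponent, setLIntegral_indicator measurableSet_Ioo,
    inter_eq_left.2 Ioo_subset_Ioi_self]
  refine setLIntegral_congr_fun measurableSet_Ioo fun s hs ↦ ?_
  rw [← ENNReal.ofReal_mul' (inv_pos.2 hs.1).le, mul_assoc, div_eq_mul_inv]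

lemma RegVaryAt0.exists_mul_lintegral_le_radialExponent {ℓ : ℝ → ℝ} {ρ : ℝ}
    (hreg : RegVaryAt0 ℓ ρ) (hmeas : Measurable ℓ) (hbdd : LocBddAway ℓ) {τ : ℝ} (hτ : 0 < τ) :
    ∃ c δ, 0 < c ∧ 0 < δ ∧ ∀ R u, 0 < R → τ * R ≤ |u| →
      ENNReal.ofReal c * ∫⁻ s in Ioo R⁻¹ δ, ENNReal.ofReal (ℓ s / s) ≤ radialExponent ℓ u := by
  obtain ⟨c, hc, h_ev⟩ := hreg.exists_le_lintegral_one_sub_cos_mul hmeas hbdd one_pos one_lt_two hτ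
  obtain ⟨δ, hδ, h_near⟩ := mem_nhdsGT_iff_exists_Ioo_subset.1
    (h_ev.and (Ioo_mem_nhdsGT one_half_pos))
  refine ⟨c, δ, hc, hδ, fun R u hR hu ↦ ?_⟩
  have h_pos : Ioo R⁻¹ δ ⊆ Ioi 0 := fun r hr ↦ (inv_pos.2 hR).trans hr.1
  set g : ℝ → ℝ≥0∞ :=
    (Ioo 0 1).indicator fun s ↦ ENNReal.ofReal ((1 - Real.cos (s * u)) * ℓ s)
  have hg : Measurable g := Measurable.indicator (by fun_prop) measurableSet_Ioo
  have h_avg (r : ℝ) (hr : r ∈ Ioo R⁻¹ δ) :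
      ENNReal.ofReal (c * ℓ r) ≤ ∫⁻ v in Ioo 1 2, g (v * r) := by
    have hr_pos : 0 < r := h_pos hr
    obtain ⟨h_le, -, hr_half⟩ := h_near ⟨hr_pos, hr.2⟩
    have ht : τ ≤ |r * u| := by
      rw [abs_mul, abs_of_pos hr_pos]
      calc τ = R⁻¹ * (τ * R) := by field_simp
        _ ≤ r * |u| := mul_le_mul hr.1.le hu (by positivity) hr_pos.le
    refine (h_le _ ht).trans_eq (setLIntegral_congr_fun measurableSet_Ioo fun v hv ↦ ?_)
    have hvr : v * r ∈ Ioo (0 : ℝ) 1 :=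
      ⟨mul_pos (one_pos.trans hv.1) hr_pos, by nlinarith [hv.2]⟩
    simp only [g, indicator_of_mem hvr, mul_assoc]
  calc ENNReal.ofReal c * ∫⁻ s in Ioo R⁻¹ δ, ENNReal.ofReal (ℓ s / s)
    _ = ∫⁻ r in Ioo R⁻¹ δ, ENNReal.ofReal (c * ℓ r) * ENNReal.ofReal r⁻¹ := by
      rw [← lintegral_const_mul _ (by fun_prop)]
      refine setLIntegral_congr_fun measurableSet_Ioo fun r hr ↦ ?_
      rw [← ENNReal.ofReal_mul hc.le, ← ENNReal.ofReal_mul' (inv_pos.2 (h_pos hr)).le, mul_assoc,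
        div_eq_mul_inv]
    _ ≤ (∫⁻ s in Ioi 0, g s * ENNReal.ofReal s⁻¹) * volume (Ioo (1 : ℝ) 2) :=
      lintegral_mul_inv_le_of_le_lintegral_comp_mul hg measurableSet_Ioo measurableSet_Ioo h_pos
        (fun _ hv ↦ one_pos.trans hv.1) h_avg
    _ = radialExponent ℓ u := by
      rw [radialExponent_eq_lintegral_indicator, Real.volume_Ioo,
        show (2 : ℝ) - 1 = 1 by norm_num, ENNReal.ofReal_one, mul_one]

lemma LocBddAway.exists_le_radialExponent {ℓ : ℝ → ℝ} (hbdd : LocBddAway ℓ) {τ : ℝ}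
    (hτ : 0 < τ) :
    ∃ c, 0 < c ∧ ∀ u, τ ≤ |u| → ENNReal.ofReal c ≤ radialExponent ℓ u := by
  obtain ⟨m, _, hm, h_le⟩ := hbdd (1 / 4) (1 / 2) (by norm_num) (by norm_num) (by norm_num)
  obtain ⟨η, hη, hcos⟩ := exists_le_lintegral_one_sub_cos (a := 1 / 4) (b := 1 / 2)
    (by norm_num) hτ
  refine ⟨m * η, by positivity, fun u hu ↦ ?_⟩
  calc ENNReal.ofReal (m * η)
    _ ≤ ENNReal.ofReal m * ∫⁻ s in Ioo (1 / 4) (1 / 2), ENNReal.ofReal (1 - Real.cos (s * u)) := by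
      rw [ENNReal.ofReal_mul hm.le]
      gcongr
      exact hcos u hu
    _ = ∫⁻ s in Ioo (1 / 4) (1 / 2), ENNReal.ofReal ((1 - Real.cos (s * u)) * m) := by
      simp_rw [ENNReal.ofReal_mul' hm.le]
      rw [lintegral_mul_const _ (by fun_prop), mul_comm]
    _ ≤ ∫⁻ s in Ioo (1 / 4) (1 / 2), ENNReal.ofReal ((1 - Real.cos (s * u)) * (ℓ s / s)) := by
      refine setLIntegral_mono' measurableSet_Ioo fun s hs ↦ ?_
      have hs_pos : 0 < s := by linarith [hs.1]
      have hm_le : m ≤ ℓ s := (h_le s hs.1.le hs.2.le).1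
      have hm_le_div : m ≤ ℓ s / s := by
        rw [le_div_iff₀ hs_pos]
        nlinarith [hs.2]
      gcongr
      exact sub_nonneg.2 (Real.cos_le_one _)
    _ ≤ radialExponent ℓ u := lintegral_mono_set (Ioo_subset_Ioo (by norm_num) (by norm_num))

lemma LocBddAway.integrableOn_Icc_div {ℓ : ℝ → ℝ} (hbdd : LocBddAway ℓ) (hmeas : Measurable ℓ)
    {a b : ℝ} (ha : 0 < a) (hb : b < 1) : IntegrableOn (fun s ↦ ℓ s / s) (Icc a b) := by
  rcases lt_or_ge b a with hab | hab
  · simp [Icc_eq_empty_of_lt hab]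
  obtain ⟨m, M, -, h_bound⟩ := hbdd a b ha hab hb
  refine Measure.integrableOn_of_bounded (M := M / a) (by simp)
    (Measurable.aestronglyMeasurable (by fun_prop)) ?_
  filter_upwards [ae_restrict_mem measurableSet_Icc] with s hs
  have hs_pos : 0 < s := ha.trans_le hs.1
  have hℓ_pos : 0 < ℓ s := hbdd.pos ⟨hs_pos, hs.2.trans_lt hb⟩
  rw [Real.norm_of_nonneg (by positivity)]
  exact div_le_div₀ (hℓ_pos.le.trans (h_bound s hs.1 hs.2).2) (h_bound s hs.1 hs.2).2 ha hs.1

lemma LocBddAway.integrableOn_Ioo_div_of_integrableOn {ℓ : ℝ → ℝ} (hbdd : LocBddAway ℓ)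
    (hmeas : Measurable ℓ) {a b : ℝ} (ha : a < 1) (hb : 0 < b)
    (h_int : IntegrableOn (fun s ↦ ℓ s / s) (Ioo a 1)) :
    IntegrableOn (fun s ↦ ℓ s / s) (Ioo b 1) := by
  refine ((hbdd.integrableOn_Icc_div hmeas hb ha).union h_int).mono_set fun s hs ↦ ?_
  rcases le_or_gt s a with hsa | hsa
  · exact .inl ⟨hs.1.le, hsa⟩
  · exact .inr ⟨hsa, hs.2⟩

lemma LocBddAway.ofReal_Lfun {ℓ : ℝ → ℝ} (hbdd : LocBddAway ℓ) {r : ℝ} (hr : 0 < r) (hr1 : r ≤ 1)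
    (h_int : IntegrableOn (fun s ↦ ℓ s / s) (Ioo r 1)) :
    ENNReal.ofReal (Lfun ℓ r) = ∫⁻ s in Ioo r 1, ENNReal.ofReal (ℓ s / s) := by
  rw [Lfun, intervalIntegral.integral_of_le hr1, integral_Ioc_eq_integral_Ioo,
    ofReal_integral_eq_lintegral_ofReal h_int]
  filter_upwards [ae_restrict_mem measurableSet_Ioo] with s hs
  have hs_pos : 0 < s := hr.trans hs.1
  exact div_nonneg (hbdd.pos ⟨hs_pos, hs.2⟩).le hs_pos.le

lemma LocBddAway.Lfun_eq_zero_of_not_integrableOn {ℓ : ℝ → ℝ} (hbdd : LocBddAway ℓ)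
    (hmeas : Measurable ℓ) {a r : ℝ} (ha : 0 < a) (hr : r ≤ 1)
    (h_int : ¬IntegrableOn (fun s ↦ ℓ s / s) (Ioo a 1)) : Lfun ℓ r = 0 := by
  rcases hr.eq_or_lt with rfl | hr
  · exact intervalIntegral.integral_same
  rw [Lfun, intervalIntegral.integral_of_le hr.le, integral_Ioc_eq_integral_Ioo]
  exact integral_undef (mt (hbdd.integrableOn_Ioo_div_of_integrableOn hmeas hr ha) h_int)

lemma exists_pos_mul_add_le_of_le {c₁ c₂ : ℝ} (hc₁ : 0 < c₁) (hc₂ : 0 < c₂) {B : ℝ≥0∞}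
    (hB : B ≠ ∞) :
    ∃ c, 0 < c ∧ ∀ x y, ENNReal.ofReal c₁ * x ≤ y → ENNReal.ofReal c₂ ≤ y →
      ENNReal.ofReal c * (x + B) ≤ y := by
  lift B to NNReal using hB
  set c := min c₁ (c₂ / (B + 1))
  have hc : 0 < c := by positivity
  have hcB : c * B ≤ c₂ :=
    calc c * B ≤ c₂ / (B + 1) * (B + 1) := by
          gcongr
          · exact min_le_right _ _
          · linarith
      _ = c₂ := div_mul_cancel₀ _ (by positivity)
  refine ⟨c / 2, half_pos hc, fun x y hx hy ↦ ?_⟩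
  rw [ENNReal.ofReal_div_of_pos two_pos, ENNReal.ofReal_ofNat, ENNReal.mul_comm_div, mul_div]
  refine ENNReal.div_le_of_le_mul ?_
  calc ENNReal.ofReal c * (x + B)
    _ ≤ ENNReal.ofReal c₁ * x + ENNReal.ofReal c₂ := by
      rw [mul_add, ← ENNReal.ofReal_coe_nnreal, ← ENNReal.ofReal_mul hc.le]
      gcongr
      exact min_le_left _ _
    _ ≤ y + y := add_le_add hx hy
    _ = y * 2 := (mul_two y).symm

lemma RegVaryAt0.exists_mul_lintegral_Ioo_one_le_radialExponent {ℓ : ℝ → ℝ} {ρ : ℝ}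
    (hreg : RegVaryAt0 ℓ ρ) (hmeas : Measurable ℓ) (hbdd : LocBddAway ℓ) {τ : ℝ} (hτ : 0 < τ)
    (h_int : ∀ r, 0 < r → IntegrableOn (fun s ↦ ℓ s / s) (Ioo r 1)) :
    ∃ c, 0 < c ∧ ∀ R u, 1 ≤ R → τ * R ≤ |u| →
      ENNReal.ofReal c * ∫⁻ s in Ioo R⁻¹ 1, ENNReal.ofReal (ℓ s / s) ≤ radialExponent ℓ u := by
  obtain ⟨c₁, δ, hc₁, hδ, h_near⟩ := hreg.exists_mul_lintegral_le_radialExponent hmeas hbdd hτ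
  obtain ⟨c₂, hc₂, h_far⟩ := hbdd.exists_le_radialExponent hτ
  obtain ⟨c, hc, h_add⟩ := exists_pos_mul_add_le_of_le hc₁ hc₂
    (h_int _ (half_pos hδ)).lintegral_lt_top.ne
  refine ⟨c, hc, fun R u hR hu ↦ ?_⟩
  have h_cover : Ioo R⁻¹ 1 ⊆ Ioo R⁻¹ δ ∪ Ioo (δ / 2) 1 := fun s hs ↦ by
    rcases lt_or_ge s δ with h | h
    · exact .inl ⟨hs.1, h⟩
    · exact .inr ⟨by linarith, hs.2⟩
  have hu_far : τ ≤ |u| := (le_mul_of_one_le_right hτ.le hR).trans hu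
  refine le_trans ?_ (h_add _ _ (h_near R u (one_pos.trans_le hR) hu) (h_far u hu_far))
  gcongr
  exact (lintegral_mono_set h_cover).trans (lintegral_union_le _ _ _)

lemma RegVaryAt0.exists_mul_Lfun_le_radialExponent {ℓ : ℝ → ℝ} {ρ : ℝ} (hreg : RegVaryAt0 ℓ ρ)
    (hmeas : Measurable ℓ) (hbdd : LocBddAway ℓ) {τ : ℝ} (hτ : 0 < τ) :
    ∃ c, 0 < c ∧ ∀ R u, 1 ≤ R → τ * R ≤ |u| →
      ENNReal.ofReal (c * Lfun ℓ R⁻¹) ≤ radialExponent ℓ u := by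
  by_cases h_half : IntegrableOn (fun s ↦ ℓ s / s) (Ioo (1 / 2) 1)
  · have h_int (r : ℝ) (hr : 0 < r) : IntegrableOn (fun s ↦ ℓ s / s) (Ioo r 1) :=
      hbdd.integrableOn_Ioo_div_of_integrableOn hmeas one_half_lt_one hr h_half
    obtain ⟨c, hc, h_le⟩ :=
      hreg.exists_mul_lintegral_Ioo_one_le_radialExponent hmeas hbdd hτ h_int
    refine ⟨c, hc, fun R u hR hu ↦ ?_⟩
    have hR_inv : 0 < R⁻¹ := inv_pos.2 (one_pos.trans_le hR)
    rw [ENNReal.ofReal_mul hc.le,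
      hbdd.ofReal_Lfun hR_inv (inv_le_one_of_one_le₀ hR) (h_int _ hR_inv)]
    exact h_le R u hR hu
  · -- The assumptions allow a non-integrable singularity of `ℓ` at `1`; then `Lfun ℓ` is the junk
    -- value `0`.
    refine ⟨1, one_pos, fun R u hR _ ↦ ?_⟩
    simp [hbdd.Lfun_eq_zero_of_not_integrableOn hmeas one_half_pos (inv_le_one_of_one_le₀ hR)
      h_half]

/-! ### Polar coordinates -/

section Polar

variable {E : Type*} [NormedAddCommGroup E] [NormedSpace ℝ E] [FiniteDimensional ℝ E]
  [MeasurableSpace E] [BorelSpace E] (μ : Measure E) [μ.IsAddHaarMeasure]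

lemma lintegral_compl_zero_eq_lintegral_toSphere {F : E → ℝ≥0∞} (hF : Measurable F) :
    ∫⁻ h in {0}ᶜ, F h ∂μ = ∫⁻ θ, (∫⁻ r in Ioi (0 : ℝ),
      ENNReal.ofReal (r ^ (Module.finrank ℝ E - 1)) * F (r • (θ : E))) ∂μ.toSphere := by
  have h_polar := μ.measurePreserving_homeomorphUnitSphereProd.lintegral_comp_emb
    (Homeomorph.measurableEmbedding _) fun p ↦ F ((homeomorphUnitSphereProd E).symm p)
  simp only [Homeomorph.symm_apply_apply] at h_polar
  have hF_symm : Measurable fun p ↦ F ((homeomorphUnitSphereProd E).symm p) :=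
    hF.comp (measurable_subtype_coe.comp (Homeomorph.measurable _))
  rw [← lintegral_subtype_comap (measurableSet_singleton (0 : E)).compl, h_polar,
    lintegral_prod _ hF_symm.aemeasurable]
  refine lintegral_congr fun θ ↦ ?_
  have hF_ray : Measurable fun r ↦ F ((homeomorphUnitSphereProd E).symm (θ, r)) :=
    hF_symm.comp measurable_prodMk_left
  rw [Measure.volumeIoiPow, lintegral_withDensity_eq_lintegral_mul _ (by fun_prop) hF_ray,
    ← lintegral_subtype_comap measurableSet_Ioi]
  simp

lemma exists_pos_le_toSphere_ball {ε : ℝ} (hε : 0 < ε) :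
    ∃ σ : ℝ, 0 < σ ∧ ∀ x : sphere (0 : E) 1, ENNReal.ofReal σ ≤ μ.toSphere (ball x ε) := by
  set c := Measure.toSphereBallBound (Module.finrank ℝ E) ε * μ (ball 0 1)
  have hc_top : c ≠ ∞ := ENNReal.mul_ne_top ENNReal.coe_ne_top measure_ball_lt_top.ne
  have hc_ne : c ≠ 0 := mul_ne_zero
    (ENNReal.coe_ne_zero.2 (Measure.toSphereBallBound_pos _ _).ne')
    (measure_ball_pos μ _ one_pos).ne'
  refine ⟨c.toReal, ENNReal.toReal_pos hc_ne hc_top, fun x ↦ ?_⟩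
  rw [ENNReal.ofReal_toReal hc_top]
  exact μ.toSphereBallBound_mul_measure_unitBall_le_toSphere_ball hε x

end Polar

section CharacteristicExponent

variable {E : Type*} [NormedAddCommGroup E] [InnerProductSpace ℝ E]

lemma norm_mul_one_sub_norm_sub_le_inner (ξ θ : E) :
    ‖ξ‖ * (1 - ‖θ - ‖ξ‖⁻¹ • ξ‖) ≤ ⟪ξ, θ⟫ := by
  rcases eq_or_ne ξ 0 with rfl | hξ
  · simp
  have h_inner : ⟪ξ, θ⟫ = ‖ξ‖ + ⟪ξ, θ - ‖ξ‖⁻¹ • ξ⟫ := by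
    rw [inner_sub_right, inner_smul_right, real_inner_self_eq_norm_sq, sq,
      inv_mul_cancel_left₀ (norm_ne_zero_iff.2 hξ), add_sub_cancel]
  rw [h_inner, mul_sub, mul_one, sub_eq_add_neg]
  gcongr
  exact neg_le_of_abs_le (abs_real_inner_le_norm _ _)

lemma one_sub_cos_inner_le (ξ h : E) :
    1 - Real.cos ⟪ξ, h⟫ ≤ (2 + ‖ξ‖ ^ 2) * min 1 (‖h‖ ^ 2) := by
  rw [mul_min_of_nonneg _ _ (by positivity), le_min_iff]
  constructor
  · linarith [Real.neg_one_le_cos ⟪ξ, h⟫, sq_nonneg ‖ξ‖]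
  · have h_sq : ⟪ξ, h⟫ ^ 2 ≤ ‖ξ‖ ^ 2 * ‖h‖ ^ 2 := by
      rw [← sq_abs, ← mul_pow]
      gcongr
      exact abs_real_inner_le_norm ξ h
    linarith [Real.one_sub_sq_div_two_le_cos (x := ⟪ξ, h⟫), sq_nonneg ‖h‖, sq_nonneg ⟪ξ, h⟫]

lemma ofReal_mul_radialExponent_le [FiniteDimensional ℝ E] {κ : ℝ} (hκ : 0 ≤ κ)
    {ℓ : ℝ → ℝ} (hmeas : Measurable ℓ) {k : E → ℝ}
    (hk : ∀ h, 0 < ‖h‖ → ‖h‖ < 1 → κ * (ℓ ‖h‖ / ‖h‖ ^ Module.finrank ℝ E) ≤ k h)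
    (ξ : E) {θ : E} (hθ : ‖θ‖ = 1) :
    ENNReal.ofReal κ * radialExponent ℓ ⟪ξ, θ⟫ ≤
      ∫⁻ r in Ioi (0 : ℝ), ENNReal.ofReal (r ^ (Module.finrank ℝ E - 1)) *
        ENNReal.ofReal ((1 - Real.cos ⟪ξ, r • θ⟫) * k (r • θ)) := by
  have : Nontrivial E := ⟨θ, 0, norm_ne_zero_iff.1 (by simp [hθ])⟩
  obtain ⟨n, hn⟩ := Nat.exists_eq_add_one.2 (Module.finrank_pos (R := ℝ) (M := E))
  rw [radialExponent, ← lintegral_const_mul _ (by fun_prop), hn, Nat.add_sub_cancel]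
  refine (setLIntegral_mono' measurableSet_Ioo fun r hr ↦ ?_).trans
    (lintegral_mono_set Ioo_subset_Ioi_self)
  have hr_pos : 0 < r := hr.1
  have h_norm : ‖r • θ‖ = r := by rw [norm_smul, hθ, mul_one, Real.norm_of_nonneg hr_pos.le]
  have hk_le : κ * (ℓ r / r ^ (n + 1)) ≤ k (r • θ) := by
    simpa only [h_norm, hn] using hk (r • θ) (by rwa [h_norm]) (h_norm.trans_lt hr.2)
  have h_nonneg : 0 ≤ 1 - Real.cos (r * ⟪ξ, θ⟫) := sub_nonneg.2 (Real.cos_le_one _)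
  rw [← ENNReal.ofReal_mul hκ, ← ENNReal.ofReal_mul (by positivity), inner_smul_right]
  refine ENNReal.ofReal_le_ofReal ?_
  calc κ * ((1 - Real.cos (r * ⟪ξ, θ⟫)) * (ℓ r / r))
    _ = r ^ n * ((1 - Real.cos (r * ⟪ξ, θ⟫)) * (κ * (ℓ r / r ^ (n + 1)))) := by
      rw [pow_succ]
      field_simp
    _ ≤ r ^ n * ((1 - Real.cos (r * ⟪ξ, θ⟫)) * k (r • θ)) := by gcongr

variable [MeasurableSpace E] [BorelSpace E]

lemma integrableOn_one_sub_cos_mul [SecondCountableTopology E] {μ : Measure E} {S : Set E}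
    {k : E → ℝ} (hk : Measurable k) (hk_nonneg : ∀ h, 0 ≤ k h)
    (hk_int : IntegrableOn (fun h ↦ min 1 (‖h‖ ^ 2) * k h) S μ) (ξ : E) :
    IntegrableOn (fun h ↦ (1 - Real.cos ⟪ξ, h⟫) * k h) S μ := by
  refine (hk_int.const_mul (2 + ‖ξ‖ ^ 2)).mono' (Measurable.aestronglyMeasurable (by fun_prop))
    (.of_forall fun h ↦ ?_)
  have h_nonneg : 0 ≤ 1 - Real.cos ⟪ξ, h⟫ := sub_nonneg.2 (Real.cos_le_one _)
  rw [Real.norm_of_nonneg (mul_nonneg h_nonneg (hk_nonneg h)), ← mul_assoc]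
  exact mul_le_mul_of_nonneg_right (one_sub_cos_inner_le ξ h) (hk_nonneg h)

variable [FiniteDimensional ℝ E]

lemma exists_mul_le_lintegral_one_sub_cos (μ : Measure E) [μ.IsAddHaarMeasure] {κ : ℝ}
    (hκ : 0 < κ) {ℓ : ℝ → ℝ} (hmeas : Measurable ℓ) :
    ∃ c, 0 < c ∧ ∀ k : E → ℝ, Measurable k →
      (∀ h, 0 < ‖h‖ → ‖h‖ < 1 → κ * (ℓ ‖h‖ / ‖h‖ ^ Module.finrank ℝ E) ≤ k h) →
      ∀ ξ : E, ξ ≠ 0 → ∀ a, (∀ u, ‖ξ‖ / 2 ≤ |u| → a ≤ radialExponent ℓ u) →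
        ENNReal.ofReal c * a ≤
          ∫⁻ h in {0}ᶜ, ENNReal.ofReal ((1 - Real.cos ⟪ξ, h⟫) * k h) ∂μ := by
  obtain ⟨σ, hσ, h_cap⟩ := exists_pos_le_toSphere_ball μ one_half_pos
  refine ⟨κ * σ, by positivity, fun k hk_meas hk ξ hξ a ha ↦ ?_⟩
  set e : sphere (0 : E) 1 :=
    ⟨‖ξ‖⁻¹ • ξ, mem_sphere_zero_iff_norm.2 (norm_smul_inv_norm (𝕜 := ℝ) hξ)⟩
  have h_inner (θ : sphere (0 : E) 1) (hθ : θ ∈ ball e (1 / 2)) : ‖ξ‖ / 2 ≤ |⟪ξ, (θ : E)⟫| := by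
    have h_dist : ‖(θ : E) - ‖ξ‖⁻¹ • ξ‖ < 1 / 2 := by rwa [← dist_eq_norm]
    calc ‖ξ‖ / 2 ≤ ‖ξ‖ * (1 - ‖(θ : E) - ‖ξ‖⁻¹ • ξ‖) := by
          rw [div_eq_mul_one_div]
          gcongr
          linarith
      _ ≤ |⟪ξ, (θ : E)⟫| := (norm_mul_one_sub_norm_sub_le_inner ξ θ).trans (le_abs_self _)
  rw [lintegral_compl_zero_eq_lintegral_toSphere μ (by fun_prop)]
  calc ENNReal.ofReal (κ * σ) * a
    _ ≤ ENNReal.ofReal κ * a * μ.toSphere (ball e (1 / 2)) := by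
      rw [ENNReal.ofReal_mul hκ.le, mul_right_comm]
      gcongr
      exact h_cap e
    _ = ∫⁻ _ in ball e (1 / 2), ENNReal.ofReal κ * a ∂μ.toSphere := (setLIntegral_const _ _).symm
    _ ≤ ∫⁻ θ in ball e (1 / 2), (∫⁻ r in Ioi (0 : ℝ),
          ENNReal.ofReal (r ^ (Module.finrank ℝ E - 1)) *
            ENNReal.ofReal ((1 - Real.cos ⟪ξ, r • (θ : E)⟫) * k (r • (θ : E)))) ∂μ.toSphere := by
      refine setLIntegral_mono' measurableSet_ball fun θ hθ ↦ ?_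
      refine (mul_le_mul_right (ha _ (h_inner θ hθ)) _).trans ?_
      exact ofReal_mul_radialExponent_le hκ.le hmeas hk ξ (mem_sphere_zero_iff_norm.1 θ.2)
    _ ≤ _ := setLIntegral_le_lintegral _ _

theorem statement4_general (μ : Measure E) [μ.IsAddHaarMeasure] {κ ρ : ℝ} (hκ : 0 < κ)
    {ℓ : ℝ → ℝ} (hmeas : Measurable ℓ) (hbdd : LocBddAway ℓ) (hreg : RegVaryAt0 ℓ ρ) :
    ∃ c, 0 < c ∧ ∀ k : E → ℝ, Measurable k → (∀ h, 0 ≤ k h) →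
      IntegrableOn (fun h ↦ min 1 (‖h‖ ^ 2) * k h) {0}ᶜ μ →
      (∀ h, 0 < ‖h‖ → ‖h‖ < 1 → κ * (ℓ ‖h‖ / ‖h‖ ^ Module.finrank ℝ E) ≤ k h) →
      ∀ ξ, 1 ≤ ‖ξ‖ → c * Lfun ℓ ‖ξ‖⁻¹ ≤ ∫ h in {0}ᶜ, (1 - Real.cos ⟪ξ, h⟫) * k h ∂μ := by
  obtain ⟨c₁, hc₁, h_radial⟩ := hreg.exists_mul_Lfun_le_radialExponent hmeas hbdd one_half_pos
  obtain ⟨c₂, hc₂, h_sphere⟩ := exists_mul_le_lintegral_one_sub_cos μ hκ hmeas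
  refine ⟨c₂ * c₁, by positivity, fun k hk_meas hk_nonneg hk_int hk ξ hξ ↦ ?_⟩
  have h_nonneg (h : E) : 0 ≤ (1 - Real.cos ⟪ξ, h⟫) * k h :=
    mul_nonneg (sub_nonneg.2 (Real.cos_le_one _)) (hk_nonneg h)
  refine (ENNReal.ofReal_le_ofReal_iff (integral_nonneg h_nonneg)).1 ?_
  rw [ofReal_integral_eq_lintegral_ofReal
      (integrableOn_one_sub_cos_mul hk_meas hk_nonneg hk_int ξ) (.of_forall h_nonneg),
    mul_assoc, ENNReal.ofReal_mul hc₂.le]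
  refine h_sphere k hk_meas hk ξ (norm_pos_iff.1 (one_pos.trans_le hξ)) _ fun u hu ↦ ?_
  exact h_radial ‖ξ‖ u hξ (by linarith)

end CharacteristicExponent

lemma KernelCondsTI.integrableOn {d : ℕ} {K₀ κ : ℝ} {ℓ : ℝ → ℝ}
    {k : EuclideanSpace ℝ (Fin d) → ℝ} (hk : KernelCondsTI d K₀ κ ℓ k) :
    IntegrableOn (fun h ↦ min 1 (‖h‖ ^ 2) * k h) {0}ᶜ := by
  obtain ⟨hk_meas, hk_nonneg, -, hk_le, -⟩ := hk
  rw [IntegrableOn, ← lintegral_ofReal_ne_top_iff_integrable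
    (Measurable.aestronglyMeasurable (by fun_prop))
    (.of_forall fun h ↦ mul_nonneg (by positivity) (hk_nonneg h))]
  exact (hk_le.trans_lt ENNReal.ofReal_lt_top).ne

/-- There exists `c > 0`, depending only on `d, K₀, κ, α, ℓ`, such that
`ψ(ξ) ≥ c L(|ξ|⁻¹)` for all `ξ ∈ ℝ^d` with `|ξ| ≥ 5`. -/
theorem statement4 (d : ℕ) (hd : 1 ≤ d) (K₀ κ α : ℝ) (hK₀ : 0 < K₀) (hκ : 1 < κ)
    (hα₀ : 0 ≤ α) (hα₂ : α < 2) (ℓ : ℝ → ℝ) (hℓmeas : Measurable ℓ)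
    (hℓpos : ∀ s : ℝ, 0 < s → s < 1 → 0 < ℓ s)
    (hℓbdd : LocBddAway ℓ) (hℓreg : RegVaryAt0 ℓ (-α)) :
    ∃ c : ℝ, 0 < c ∧
      ∀ k : EuclideanSpace ℝ (Fin d) → ℝ, KernelCondsTI d K₀ κ ℓ k →
        ∀ ξ : EuclideanSpace ℝ (Fin d), 5 ≤ ‖ξ‖ →
          c * Lfun ℓ (‖ξ‖⁻¹) ≤ psiFun d k ξ := by
  obtain ⟨c, hc, h_le⟩ := statement4_general (volume : Measure (EuclideanSpace ℝ (Fin d)))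
    (inv_pos.2 (one_pos.trans hκ)) hℓmeas hℓbdd hℓreg
  refine ⟨c, hc, fun k hk ξ hξ ↦ h_le k hk.1 hk.2.1 hk.integrableOn (fun h h0 h1 ↦ ?_) ξ ?_⟩
  · simpa only [finrank_euclideanSpace_fin] using (hk.2.2.2.2 h h0 h1.le).1
  · linarith
end
end

section
/- There exists a constant c' > 0, depending only on c₄, such that for every real M ≥ 5, ∫_0^1 (1 − cos(M r)) F(r) dr ≥ c' ∫_{3π/(2M)}^1 F(r) dr. -/
open MeasureTheory Set Filter Real

noncomputable section

/-!
The weights `1 - cos (M r)` and `1 - cos (M (r - π / M))` are nonnegative and add up to `2`. Since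
`c₄ * F r` is at most both `F r` and `F (r - π / M)`, the function `G r = (1 - cos (M r)) * F r`
satisfies `2 * c₄ * F r ≤ G r + G (r - π / M)`. For `r` in `(3π/(2M), 1)` both `r` and `r - π / M`
lie in `(0, 1)`, so the right-hand side integrates to at most twice the integral of `G` over
`(0, 1)`, and the constant `c' = c₄` works.
-/

theorem mul_le_weighted_add {m u v w x y : ℝ} (hu : 0 ≤ u) (hv : 0 ≤ v) (huv : u + v = m)
    (hx : w ≤ x) (hy : w ≤ y) : m * w ≤ u * x + v * y :=
  calc
    m * w = u * w + v * w := by rw [← huv, add_mul]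
    _ ≤ u * x + v * y := by gcongr

theorem one_sub_cos_nonneg (x : ℝ) : 0 ≤ 1 - cos x :=
  sub_nonneg.mpr (cos_le_one x)

section Subinterval

variable {μ : Measure ℝ} {l x y b : ℝ}

theorem intervalIntegrable_of_subinterval {E : Type*} [NormedAddCommGroup E] {f : ℝ → E}
    (hlx : l ≤ x) (hxy : x ≤ y) (hyb : y ≤ b) (hf : IntervalIntegrable f μ l b) :
    IntervalIntegrable f μ x y :=
  hf.mono_set (uIcc_subset_uIcc (mem_uIcc_of_le hlx (hxy.trans hyb))
    (mem_uIcc_of_le (hlx.trans hxy) hyb))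

theorem integral_subinterval_le_of_nonneg_on_Ioo [NullSingletonClass μ] {f : ℝ → ℝ}
    (hlx : l ≤ x) (hxy : x ≤ y) (hyb : y ≤ b) (hf : IntervalIntegrable f μ l b)
    (hf₀ : ∀ r ∈ Ioo l b, 0 ≤ f r) : ∫ r in x..y, f r ∂μ ≤ ∫ r in l..b, f r ∂μ := by
  refine intervalIntegral.integral_mono_interval hlx hxy hyb ?_ hf
  rw [← restrict_Ioo_eq_restrict_Ioc]
  exact ae_restrict_of_forall_mem measurableSet_Ioo hf₀

end Subinterval

theorem mul_integral_le_integral_weight_mul {F w : ℝ → ℝ} {l a b c d : ℝ} (hd : 0 ≤ d)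
    (hla : l + d ≤ a) (hab : a ≤ b) (hF : IntervalIntegrable F volume a b)
    (hwF : IntervalIntegrable (fun r ↦ w r * F r) volume l b)
    (hw₀ : ∀ r ∈ Ioo l b, 0 ≤ w r) (hw : ∀ r ∈ Ioo a b, w r + w (r - d) = 2)
    (hF₀ : ∀ r ∈ Ioo l b, 0 ≤ F r)
    (hF_decr : ∀ r ∈ Ioo l b, ∀ s ∈ Ioo l b, r ≤ s → c * F s ≤ F r) :
    c * ∫ r in a..b, F r ≤ ∫ r in l..b, w r * F r := by
  set G : ℝ → ℝ := fun r ↦ w r * F r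
  have hG₀ : ∀ r ∈ Ioo l b, 0 ≤ G r := fun r hr ↦ mul_nonneg (hw₀ r hr) (hF₀ r hr)
  have hG : IntervalIntegrable G volume a b :=
    intervalIntegrable_of_subinterval (by linarith) hab le_rfl hwF
  have hG_shift : IntervalIntegrable (fun r ↦ G (r - d)) volume a b := by
    have hG_sub : IntervalIntegrable G volume (a - d) (b - d) :=
      intervalIntegrable_of_subinterval (by linarith) (by linarith) (by linarith) hwF
    simpa only [sub_add_cancel] using hG_sub.comp_sub_right d
  have hG_le : ∫ r in a..b, G r ≤ ∫ r in l..b, G r :=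
    integral_subinterval_le_of_nonneg_on_Ioo (by linarith) hab le_rfl hwF hG₀
  have hG_shift_le : ∫ r in a..b, G (r - d) ≤ ∫ r in l..b, G r := by
    rw [intervalIntegral.integral_comp_sub_right]
    exact integral_subinterval_le_of_nonneg_on_Ioo (by linarith) (by linarith) (by linarith) hwF hG₀
  have pointwise : ∀ r ∈ Ioo a b, 2 * (c * F r) ≤ G r + G (r - d) := by
    rintro r ⟨har, hrb⟩
    have hr : r ∈ Ioo l b := ⟨by linarith, hrb⟩
    have hr_shift : r - d ∈ Ioo l b := ⟨by linarith, by linarith⟩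
    exact mul_le_weighted_add (hw₀ r hr) (hw₀ _ hr_shift) (hw r ⟨har, hrb⟩)
      (hF_decr r hr r hr le_rfl) (hF_decr _ hr_shift r hr (sub_le_self r hd))
  have doubled : 2 * (c * ∫ r in a..b, F r) ≤ 2 * ∫ r in l..b, G r :=
    calc
      2 * (c * ∫ r in a..b, F r) = ∫ r in a..b, 2 * (c * F r) := by
        simp only [intervalIntegral.integral_const_mul]
      _ ≤ ∫ r in a..b, (G r + G (r - d)) :=
        intervalIntegral.integral_mono_on_of_le_Ioo hab ((hF.const_mul c).const_mul 2)
          (hG.add hG_shift) pointwise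
      _ = (∫ r in a..b, G r) + ∫ r in a..b, G (r - d) :=
        intervalIntegral.integral_add hG hG_shift
      _ ≤ 2 * ∫ r in l..b, G r := by linarith
  linarith

theorem statement11_general {F : ℝ → ℝ} {l a b c M : ℝ} (hM : 0 < M) (hla : l + π / M ≤ a)
    (hab : a ≤ b) (hF : IntervalIntegrable F volume a b)
    (hcosF : IntervalIntegrable (fun r ↦ (1 - cos (M * r)) * F r) volume l b)
    (hF₀ : ∀ r ∈ Ioo l b, 0 ≤ F r)
    (hF_decr : ∀ r ∈ Ioo l b, ∀ s ∈ Ioo l b, r ≤ s → c * F s ≤ F r) :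
    c * ∫ r in a..b, F r ≤ ∫ r in l..b, (1 - cos (M * r)) * F r := by
  refine mul_integral_le_integral_weight_mul (by positivity) hla hab hF hcosF
    (fun r _ ↦ one_sub_cos_nonneg (M * r)) (fun r _ ↦ ?_) hF₀ hF_decr
  rw [mul_sub, mul_div_cancel₀ π hM.ne', cos_sub_pi]
  ring

theorem three_pi_div_two_mul_mem_Icc {M : ℝ} (hM : 5 ≤ M) :
    3 * π / (2 * M) ∈ Icc (π / M) 1 := by
  have : 0 < M := by linarith
  constructor
  · rw [mul_div_mul_comm]
    exact le_mul_of_one_le_left (by positivity) (by norm_num)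
  · rw [div_le_one (by positivity)]
    linarith [pi_lt_d2]

/-- For every constant `c₄ ∈ (0,1]` there exists `c' > 0`, depending
only on `c₄`, such that whenever `F : (0,1) → (0,∞)` is Lebesgue integrable and satisfies
`F(r) ≥ c₄ F(s)` for all `0 < r ≤ s < 1`, one has, for every real `M ≥ 5`,
`∫_0^1 (1 - cos(M r)) F(r) dr ≥ c' ∫_{3π/(2M)}^1 F(r) dr`. -/
theorem statement11 (c₄ : ℝ) (hc₄₀ : 0 < c₄) (hc₄₁ : c₄ ≤ 1) :
    ∃ c' : ℝ, 0 < c' ∧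
      ∀ F : ℝ → ℝ, IntegrableOn F (Set.Ioo (0:ℝ) 1) →
        (∀ r : ℝ, 0 < r → r < 1 → 0 < F r) →
        (∀ r s : ℝ, 0 < r → r ≤ s → s < 1 → c₄ * F s ≤ F r) →
        ∀ M : ℝ, 5 ≤ M →
          c' * ∫ r in (3 * π / (2 * M))..1, F r
            ≤ ∫ r in (0:ℝ)..1, (1 - Real.cos (M * r)) * F r := by
  refine ⟨c₄, hc₄₀, fun F hF hF₀ hF_decr M hM ↦ ?_⟩
  have hM₀ : 0 < M := by linarith
  obtain ⟨hπa, ha₁⟩ := three_pi_div_two_mul_mem_Icc hM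
  have hF₀₁ := (intervalIntegrable_iff_integrableOn_Ioo_of_le zero_le_one).mpr hF
  exact statement11_general hM₀ (by rwa [zero_add]) ha₁
    (intervalIntegrable_of_subinterval (by positivity) ha₁ le_rfl hF₀₁)
    (hF₀₁.continuousOn_mul (by fun_prop)) (fun r hr ↦ (hF₀ r hr.1 hr.2).le)
    (fun r hr s hs hrs ↦ hF_decr r s hr.1 hrs hs.2)
end
end
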